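/- Let p be a probability distribution on ℝ^d with supp(p) ⊂ B_R(0), mean μ, and covariance Σ. For t ∈ (−1,1) define W_t(y;x) = exp(−‖x − ty‖²/(2(1−t)²)), D_t(x) = E_{X~p}[W_t(X;x)], N_t(x) = E_{X~p}[X W_t(X;x)], and m_t(x) = N_t(x)/D_t(x); define m_t^G analogously with p replaced by the Gaussian N(μ, Σ), so that m_t^G(x) = μ + tΣ(t²Σ + (1−t)²I)^{-1}(x − tμ). Then for every δ ∈ (0,1) there exists a bounded function H̃ : B̄_R(0) × [−δ, δ] → ℝ^d such that m_t(x) = m_t^G(x) + t² H̃(x, t) for all x ∈ B̄_R(0) and all |t| ≤ δ. -/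

import Mathlib

open MeasureTheory ProbabilityTheory

noncomputable section

/-- The mean `μ = E_{X ~ p}[X]` of a measure `p` on `ℝ^d`. -/
def meanVec {d : ℕ} (p : Measure (EuclideanSpace ℝ (Fin d))) : EuclideanSpace ℝ (Fin d) :=
  ∫ y, y ∂p

/-- The covariance matrix `Σ = E[(X − μ)(X − μ)^T]` of a measure `p` on `ℝ^d`. -/
def covMatrix {d : ℕ} (p : Measure (EuclideanSpace ℝ (Fin d))) :
    Matrix (Fin d) (Fin d) ℝ :=
  Matrix.of fun i j => ∫ y, (y i - meanVec p i) * (y j - meanVec p j) ∂p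

/-- `W_t(y; x) = exp(−‖x − ty‖²/(2(1−t)²))`. -/
def Wt {d : ℕ} (t : ℝ) (y x : EuclideanSpace ℝ (Fin d)) : ℝ :=
  Real.exp (-‖x - t • y‖ ^ 2 / (2 * (1 - t) ^ 2))

/-- `D_t(x) = E_{X ~ p}[W_t(X; x)]`. -/
def Dt {d : ℕ} (p : Measure (EuclideanSpace ℝ (Fin d))) (t : ℝ)
    (x : EuclideanSpace ℝ (Fin d)) : ℝ :=
  ∫ y, Wt t y x ∂p

/-- `N_t(x) = E_{X ~ p}[X · W_t(X; x)]`. -/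
def Nt {d : ℕ} (p : Measure (EuclideanSpace ℝ (Fin d))) (t : ℝ)
    (x : EuclideanSpace ℝ (Fin d)) : EuclideanSpace ℝ (Fin d) :=
  ∫ y, Wt t y x • y ∂p

/-- The denoiser `m_t(x) = N_t(x)/D_t(x)`. -/
def mtDen {d : ℕ} (p : Measure (EuclideanSpace ℝ (Fin d))) (t : ℝ)
    (x : EuclideanSpace ℝ (Fin d)) : EuclideanSpace ℝ (Fin d) :=
  (Dt p t x)⁻¹ • Nt p t x

/-- `m_t^G(x) = μ + tΣ(t²Σ + (1−t)²I)⁻¹(x − tμ)`, the denoiser of the Gaussian `N(μ, Σ)`. -/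
def mtG {d : ℕ} (μv : EuclideanSpace ℝ (Fin d)) (S : Matrix (Fin d) (Fin d) ℝ) (t : ℝ)
    (x : EuclideanSpace ℝ (Fin d)) : EuclideanSpace ℝ (Fin d) :=
  μv + t • Matrix.toEuclideanLin
      (S * (t ^ 2 • S + (1 - t) ^ 2 • (1 : Matrix (Fin d) (Fin d) ℝ))⁻¹) (x - t • μv)

/-!
With `h = t x / (1 - t)²` and `q = t² / (1 - t)²`, the denoiser `m_t(x)` is the mean of `p` tilted
by `exp (⟪h, y⟫ - (q / 2) ‖y‖²)`, and `m_t^G(x) = μ + Σ u` with `u` solving `u + q Σ u = h - q μ`.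
To first order in `t` both equal `μ + Σ h`, and both remainders are at most a constant times
`R³ (q + ‖h‖²)`, which carries the factor `t²`.
-/

section AccretiveResolvent

variable {E : Type*} [NormedAddCommGroup E] [InnerProductSpace ℝ E]

theorem norm_le_norm_add_of_inner_nonneg {v w : E} (h : 0 ≤ inner ℝ v w) : ‖v‖ ≤ ‖v + w‖ := by
  refine le_of_sq_le_sq ?_ (norm_nonneg _)
  rw [norm_add_sq_real]
  nlinarith [sq_nonneg ‖w‖]

/-- If `(1 + qT) u = h - q m`, then `u - h = -q (1 + qT)⁻¹ (m + T h)`, and both `(1 + qT)⁻¹` and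
`qT (1 + qT)⁻¹` are contractions. -/
theorem norm_map_sub_map_le_of_add_smul_eq {T : E →L[ℝ] E} (hT : ∀ v, 0 ≤ inner ℝ (T v) v)
    {q : ℝ} (hq : 0 ≤ q) {h m u : E} (hu : u + q • T u = h - q • m) :
    ‖T u - T h‖ ≤ min 1 (q * ‖T‖) * ‖m + T h‖ := by
  set w := u - h with hw
  have hTw : T u - T h = T w := (map_sub T u h).symm
  have hinner : 0 ≤ inner ℝ w (q • T w) := by
    rw [inner_smul_right, real_inner_comm]
    exact mul_nonneg hq (hT w)
  have hnorm : ‖w + q • T w‖ = q * ‖m + T h‖ := by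
    have : w + q • T w = -(q • (m + T h)) := by
      rw [← hTw, hw, ← sub_eq_zero]
      linear_combination (norm := module) hu
    rw [this, norm_neg, norm_smul, Real.norm_of_nonneg hq]
  have hw_le : ‖w‖ ≤ q * ‖m + T h‖ := hnorm ▸ norm_le_norm_add_of_inner_nonneg hinner
  rw [hTw, min_mul_of_nonneg _ _ (norm_nonneg _), one_mul]
  refine le_min ?_ ?_
  · rcases hq.eq_or_lt with rfl | hq
    · have : w = 0 := by simpa using hw_le
      simp [this]
    · have hqTw : ‖q • T w‖ ≤ q * ‖m + T h‖ := by
        rw [← hnorm, add_comm]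
        exact norm_le_norm_add_of_inner_nonneg (real_inner_comm _ w ▸ hinner)
      rwa [norm_smul, Real.norm_of_nonneg hq.le, mul_le_mul_iff_right₀ hq] at hqTw
  · calc ‖T w‖ ≤ ‖T‖ * ‖w‖ := T.le_opNorm w
      _ ≤ ‖T‖ * (q * ‖m + T h‖) := by gcongr
      _ = q * ‖T‖ * ‖m + T h‖ := by ring

end AccretiveResolvent

section Tilted

theorem abs_exp_le_exp {u A : ℝ} (hu : |u| ≤ A) : |Real.exp u| ≤ Real.exp A := by
  rw [Real.abs_exp]
  exact Real.exp_le_exp.2 (abs_le.1 hu).2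

theorem abs_exp_sub_one_div_sub_le {u D A : ℝ} (hu : |u| ≤ A) (hA : A ≤ 1)
    (hD : Real.exp (-A) ≤ D) (hD' : |1 - D| ≤ 2 * A) :
    |(Real.exp u - 1) / D - u| ≤ 9 * A ^ 2 := by
  have hD0 : 0 < D := (Real.exp_pos _).trans_le hD
  have hnum : |Real.exp u - 1 - u + (1 - D) * u| ≤ 3 * A ^ 2 := by
    calc |Real.exp u - 1 - u + (1 - D) * u|
        ≤ |Real.exp u - 1 - u| + |1 - D| * |u| := abs_mul (1 - D) u ▸ abs_add_le _ _
      _ ≤ |u| ^ 2 + 2 * A * A := by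
          gcongr
          · exact (Real.abs_exp_sub_one_sub_id_le (hu.trans hA)).trans_eq (sq_abs u).symm
          · exact (abs_nonneg _).trans hD'
      _ ≤ A ^ 2 + 2 * A * A := by gcongr
      _ = 3 * A ^ 2 := by ring
  have h3D : 1 ≤ 3 * D := by
    have hexp : Real.exp A ≤ 3 :=
      (Real.exp_le_exp.2 hA).trans (Real.exp_one_lt_d9.le.trans (by norm_num))
    calc (1 : ℝ) = Real.exp A * Real.exp (-A) := by
          rw [← Real.exp_add, add_neg_cancel, Real.exp_zero]
      _ ≤ 3 * D := by gcongr
  have hdiv : (Real.exp u - 1) / D - u = (Real.exp u - 1 - u + (1 - D) * u) / D := by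
    field_simp
    ring
  rw [hdiv, abs_div, abs_of_pos hD0, div_le_iff₀ hD0]
  nlinarith [sq_nonneg A]

variable {Ω : Type*} [MeasurableSpace Ω] {p : Measure Ω} [IsProbabilityMeasure p]
  {f : Ω → ℝ} {A : ℝ}

theorem integrable_exp_of_ae_abs_le (hf : AEMeasurable f p) (hfA : ∀ᵐ ω ∂p, |f ω| ≤ A) :
    Integrable (fun ω ↦ Real.exp (f ω)) p := by
  refine Integrable.of_bound (Real.measurable_exp.comp_aemeasurable hf).aestronglyMeasurable
    (Real.exp A) ?_
  filter_upwards [hfA] with ω hω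
  exact abs_exp_le_exp hω

theorem exp_neg_le_integral_exp (hf : AEMeasurable f p) (hfA : ∀ᵐ ω ∂p, |f ω| ≤ A) :
    Real.exp (-A) ≤ ∫ ω, Real.exp (f ω) ∂p := by
  have := integral_mono_ae (integrable_const _) (integrable_exp_of_ae_abs_le hf hfA)
    (hfA.mono fun ω hω ↦ Real.exp_le_exp.2 (abs_le.1 hω).1)
  simpa using this

theorem abs_one_sub_integral_exp_le (hf : AEMeasurable f p) (hfA : ∀ᵐ ω ∂p, |f ω| ≤ A)
    (hA : A ≤ 1) : |1 - ∫ ω, Real.exp (f ω) ∂p| ≤ 2 * A := by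
  have hsub : 1 - ∫ ω, Real.exp (f ω) ∂p = ∫ ω, (1 - Real.exp (f ω)) ∂p := by
    rw [integral_sub (integrable_const _) (integrable_exp_of_ae_abs_le hf hfA)]
    simp
  have hle : ∀ᵐ ω ∂p, ‖1 - Real.exp (f ω)‖ ≤ 2 * A := by
    filter_upwards [hfA] with ω hω
    rw [Real.norm_eq_abs, abs_sub_comm]
    exact (Real.abs_exp_sub_one_le (hω.trans hA)).trans (by gcongr)
  simpa [hsub] using norm_integral_le_of_norm_le_const hle

variable {F : Type*} [NormedAddCommGroup F] [NormedSpace ℝ F] {g : Ω → F}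

theorem norm_integral_tilted_sub_integral_smul_le (hf : AEMeasurable f p)
    (hfA : ∀ᵐ ω ∂p, |f ω| ≤ A) (hA : A ≤ 1) (hg : Integrable g p) (hg0 : ∫ ω, g ω ∂p = 0) :
    ‖∫ ω, g ω ∂p.tilted f - ∫ ω, f ω • g ω ∂p‖ ≤ 9 * A ^ 2 * ∫ ω, ‖g ω‖ ∂p := by
  set D := ∫ ω, Real.exp (f ω) ∂p
  have hfg : Integrable (fun ω ↦ f ω • g ω) p := hg.bdd_smul A hf.aestronglyMeasurable hfA
  have hexpg : Integrable (fun ω ↦ (Real.exp (f ω) / D) • g ω) p := by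
    simp only [div_eq_inv_mul, mul_smul]
    refine (hg.bdd_smul (Real.exp A) (Real.measurable_exp.comp_aemeasurable hf).aestronglyMeasurable
      ?_).smul D⁻¹
    filter_upwards [hfA] with ω hω using abs_exp_le_exp hω
  -- Since `g` is centred, subtracting the constant `1 / D` from the density changes nothing.
  have hcentred : ∫ ω, g ω ∂p.tilted f - ∫ ω, f ω • g ω ∂p
      = ∫ ω, ((Real.exp (f ω) - 1) / D - f ω) • g ω ∂p := by
    have hDg : Integrable (fun ω ↦ (1 / D) • g ω) p := hg.smul (1 / D)
    have hsub : Integrable (fun ω ↦ (Real.exp (f ω) / D) • g ω - (1 / D) • g ω) p := hexpg.sub hDg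
    simp only [sub_smul, sub_div]
    rw [integral_tilted, integral_sub hsub hfg, integral_sub hexpg hDg, integral_smul, hg0,
      smul_zero, sub_zero]
  rw [hcentred, ← integral_const_mul]
  refine norm_integral_le_of_norm_le (hg.norm.const_mul _) ?_
  filter_upwards [hfA] with ω hω
  rw [norm_smul]
  gcongr
  exact abs_exp_sub_one_div_sub_le hω hA (exp_neg_le_integral_exp hf hfA)
    (abs_one_sub_integral_exp_le hf hfA hA)

end Tilted

section BoundedMeasure

variable {E : Type*} [NormedAddCommGroup E] [MeasurableSpace E] {p : Measure E}
  [IsProbabilityMeasure p] {R : ℝ}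

theorem nonneg_of_ae_norm_le (hp : ∀ᵐ y ∂p, ‖y‖ ≤ R) : 0 ≤ R :=
  let ⟨y, hy⟩ := hp.exists
  (norm_nonneg y).trans hy

theorem memLp_id_of_ae_norm_le [BorelSpace E] [SecondCountableTopology E]
    (hp : ∀ᵐ y ∂p, ‖y‖ ≤ R) : MemLp id 2 p :=
  MemLp.of_bound aestronglyMeasurable_id R hp

variable [NormedSpace ℝ E]

theorem integral_sub_integral_id [CompleteSpace E] : ∫ y, (y - ∫ z, z ∂p) ∂p = 0 := by
  simpa only [average_eq_integral] using integral_sub_average p fun y ↦ y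

theorem norm_integral_id_le (hp : ∀ᵐ y ∂p, ‖y‖ ≤ R) : ‖∫ y, y ∂p‖ ≤ R := by
  simpa using norm_integral_le_of_norm_le_const hp

theorem ae_norm_sub_integral_le (hp : ∀ᵐ y ∂p, ‖y‖ ≤ R) :
    ∀ᵐ y ∂p, ‖y - ∫ z, z ∂p‖ ≤ 2 * R := by
  filter_upwards [hp] with y hy
  linarith [norm_sub_le y (∫ z, z ∂p), norm_integral_id_le hp]

theorem norm_integral_tilted_sub_integral_id_le {f : E → ℝ}
    (hf : Integrable (fun y ↦ Real.exp (f y)) p) (hp : ∀ᵐ y ∂p, ‖y‖ ≤ R) :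
    ‖∫ y, (y - ∫ z, z ∂p) ∂p.tilted f‖ ≤ 2 * R := by
  have := isProbabilityMeasure_tilted hf
  simpa using norm_integral_le_of_norm_le_const
    ((tilted_absolutelyContinuous p f).ae_le (ae_norm_sub_integral_le hp))

theorem memLp_id_map_sub_integral [BorelSpace E] [SecondCountableTopology E]
    (hp : MemLp id 2 p) : MemLp id 2 (p.map fun y ↦ y - ∫ z, z ∂p) :=
  (memLp_map_measure_iff aestronglyMeasurable_id (by fun_prop)).2 (hp.sub (memLp_const _))

end BoundedMeasure

section QuadraticTilt

variable {E : Type*} [NormedAddCommGroup E] [InnerProductSpace ℝ E]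

/-- The exponent `⟪h, y⟫ - (q / 2) ‖y‖²` of a Gaussian likelihood of precision `q`, as a function
of the parameter `y` and up to an additive constant. -/
def quadraticTilt (h : E) (q : ℝ) (y : E) : ℝ :=
  inner ℝ h y - q / 2 * ‖y‖ ^ 2

theorem continuous_quadraticTilt (h : E) (q : ℝ) : Continuous (quadraticTilt h q) := by
  unfold quadraticTilt
  fun_prop

theorem abs_quadraticTilt_le {R q : ℝ} (hq : 0 ≤ q) (h : E) {y : E} (hy : ‖y‖ ≤ R) :
    |quadraticTilt h q y| ≤ R * ‖h‖ + q / 2 * R ^ 2 := by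
  have hinner : |inner ℝ h y| ≤ R * ‖h‖ := by
    rw [mul_comm]
    exact (abs_real_inner_le_norm h y).trans (by gcongr)
  have hsq : |q / 2 * ‖y‖ ^ 2| ≤ q / 2 * R ^ 2 := by
    rw [abs_of_nonneg (by positivity)]
    gcongr
  exact (abs_sub _ _).trans (add_le_add hinner hsq)

variable [CompleteSpace E] [MeasurableSpace E] [BorelSpace E]

/-- The covariance operator `h ↦ E[⟪h, X - E X⟫ (X - E X)]` of `p`. Mathlib's
`covarianceOperator` is uncentered, so it is applied to the centered measure. -/
def centeredCovariance (p : Measure E) : E →L[ℝ] E :=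
  covarianceOperator (p.map fun y ↦ y - ∫ z, z ∂p)

theorem inner_centeredCovariance_nonneg (p : Measure E) (v : E) :
    0 ≤ inner ℝ (centeredCovariance p v) v :=
  isPositive_covarianceOperator.inner_nonneg_left v

variable {p : Measure E} [IsProbabilityMeasure p] [SecondCountableTopology E]

theorem centeredCovariance_apply (hp : MemLp id 2 p) (h : E) :
    centeredCovariance p h = ∫ y, inner ℝ h y • (y - ∫ z, z ∂p) ∂p := by
  set m := ∫ z, z ∂p
  have hsub : MemLp (fun y ↦ y - m) 2 p := hp.sub (memLp_const m)
  have hint : Integrable (fun y ↦ inner ℝ h y • (y - m)) p :=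
    memLp_one_iff_integrable.1 (hsub.smul (hp.const_inner h))
  rw [centeredCovariance, covarianceOperator_apply (memLp_id_map_sub_integral hp),
    integral_map (by fun_prop) (by fun_prop)]
  have hconst : Integrable (fun y ↦ inner ℝ h m • (y - m)) p :=
    (hsub.integrable one_le_two).smul _
  simp only [inner_sub_right, sub_smul]
  rw [integral_sub hint hconst, integral_smul, integral_sub_integral_id, smul_zero, sub_zero]

variable {R : ℝ}

theorem norm_centeredCovariance_le (hp : ∀ᵐ y ∂p, ‖y‖ ≤ R) :
    ‖centeredCovariance p‖ ≤ 2 * R ^ 2 := by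
  refine ContinuousLinearMap.opNorm_le_bound _ (by positivity) fun h ↦ ?_
  have hle : ∀ᵐ y ∂p, ‖inner ℝ h y • (y - ∫ z, z ∂p)‖ ≤ 2 * R ^ 2 * ‖h‖ := by
    filter_upwards [hp, ae_norm_sub_integral_le hp] with y hy hy'
    calc ‖inner ℝ h y • (y - ∫ z, z ∂p)‖ ≤ ‖h‖ * R * (2 * R) := by
          rw [norm_smul]
          exact mul_le_mul ((norm_inner_le_norm h y).trans (by gcongr)) hy' (norm_nonneg _)
            (mul_nonneg (norm_nonneg h) ((norm_nonneg y).trans hy))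
      _ = 2 * R ^ 2 * ‖h‖ := by ring
  simpa [centeredCovariance_apply (memLp_id_of_ae_norm_le hp)]
    using norm_integral_le_of_norm_le_const hle

theorem norm_integral_quadraticTilt_smul_sub_le (hp : ∀ᵐ y ∂p, ‖y‖ ≤ R) {q : ℝ} (hq : 0 ≤ q)
    (h : E) :
    ‖∫ y, quadraticTilt h q y • (y - ∫ z, z ∂p) ∂p - centeredCovariance p h‖ ≤ q * R ^ 3 := by
  set m := ∫ z, z ∂p
  have hL2 := memLp_id_of_ae_norm_le hp
  have hsub : MemLp (fun y ↦ y - m) 2 p := hL2.sub (memLp_const m)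
  have htilt : Integrable (fun y ↦ quadraticTilt h q y • (y - m)) p :=
    (hsub.integrable one_le_two).bdd_smul _
      (continuous_quadraticTilt h q).aestronglyMeasurable
      (hp.mono fun y hy ↦ abs_quadraticTilt_le hq h hy)
  have hinner : Integrable (fun y ↦ inner ℝ h y • (y - m)) p :=
    memLp_one_iff_integrable.1 (hsub.smul (hL2.const_inner h))
  have hle : ∀ᵐ y ∂p, ‖quadraticTilt h q y • (y - m) - inner ℝ h y • (y - m)‖ ≤ q * R ^ 3 := by
    filter_upwards [hp, ae_norm_sub_integral_le hp] with y hy hy'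
    calc ‖quadraticTilt h q y • (y - m) - inner ℝ h y • (y - m)‖
        = q / 2 * ‖y‖ ^ 2 * ‖y - m‖ := by
          rw [← sub_smul, quadraticTilt, sub_sub_cancel_left, norm_smul, norm_neg,
            Real.norm_of_nonneg (by positivity)]
      _ ≤ q / 2 * R ^ 2 * (2 * R) := by gcongr
      _ = q * R ^ 3 := by ring
  rw [centeredCovariance_apply hL2, ← integral_sub htilt hinner]
  simpa using norm_integral_le_of_norm_le_const hle

theorem norm_integral_tilted_sub_centeredCovariance_le_of_le_one (hp : ∀ᵐ y ∂p, ‖y‖ ≤ R) {q : ℝ}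
    (hq : 0 ≤ q) {h : E} (hle : R * ‖h‖ + q / 2 * R ^ 2 ≤ 1) :
    ‖∫ y, (y - ∫ z, z ∂p) ∂p.tilted (quadraticTilt h q) - centeredCovariance p h‖
      ≤ 9 * (R * ‖h‖ + q / 2 * R ^ 2) ^ 2 * (2 * R) + q * R ^ 3 := by
  have hsub : Integrable (fun y ↦ y - ∫ z, z ∂p) p :=
    ((memLp_id_of_ae_norm_le hp).integrable one_le_two).sub (integrable_const _)
  have hnorm : ∫ y, ‖y - ∫ z, z ∂p‖ ∂p ≤ 2 * R := by
    simpa using integral_mono_ae hsub.norm (integrable_const _) (ae_norm_sub_integral_le hp)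
  have hlin := norm_integral_tilted_sub_integral_smul_le
    (continuous_quadraticTilt h q).aemeasurable
    (hp.mono fun y hy ↦ abs_quadraticTilt_le hq h hy) hle hsub integral_sub_integral_id
  calc _ ≤ _ := norm_sub_le_norm_sub_add_norm_sub _
        (∫ y, quadraticTilt h q y • (y - ∫ z, z ∂p) ∂p) _
    _ ≤ _ := add_le_add (hlin.trans (by gcongr)) (norm_integral_quadraticTilt_smul_sub_le hp hq h)

/-- If the exponent is at most `1` this is the first-order expansion in it; otherwise the
right-hand side already dominates each of the two terms on the left. -/
theorem norm_integral_tilted_sub_centeredCovariance_le (hp : ∀ᵐ y ∂p, ‖y‖ ≤ R) {q : ℝ}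
    (hq : 0 ≤ q) (h : E) :
    ‖∫ y, (y - ∫ z, z ∂p) ∂p.tilted (quadraticTilt h q) - centeredCovariance p h‖
      ≤ 36 * R ^ 3 * (q + ‖h‖ ^ 2) := by
  have hR := nonneg_of_ae_norm_le hp
  obtain ⟨a, ha⟩ : ∃ a, a = R * ‖h‖ := ⟨_, rfl⟩
  obtain ⟨b, hb⟩ : ∃ b, b = q * R ^ 2 := ⟨_, rfl⟩
  have hb0 : 0 ≤ b := hb ▸ by positivity
  have hA : R * ‖h‖ + q / 2 * R ^ 2 = a + b / 2 := by rw [ha, hb]; ring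
  have hrhs : 36 * R ^ 3 * (q + ‖h‖ ^ 2) = R * (36 * (b + a ^ 2)) := by rw [ha, hb]; ring
  rw [hrhs]
  rcases le_total (a + b / 2) 1 with hle | hge
  · calc _ ≤ _ := norm_integral_tilted_sub_centeredCovariance_le_of_le_one hp hq (hA.trans_le hle)
      _ = R * (18 * (a + b / 2) ^ 2 + b) := by rw [hA, hb]; ring
      _ ≤ R * (36 * (b + a ^ 2)) := by
          gcongr
          nlinarith [sq_nonneg (a - b / 2)]
  · have hexp := integrable_exp_of_ae_abs_le (continuous_quadraticTilt h q).aemeasurable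
      (hp.mono fun y hy ↦ abs_quadraticTilt_le hq h hy)
    calc _ ≤ 2 * R + 2 * R ^ 2 * ‖h‖ := norm_sub_le_of_le
          (norm_integral_tilted_sub_integral_id_le hexp hp)
          ((centeredCovariance p).le_of_opNorm_le (norm_centeredCovariance_le hp) h)
      _ = R * (2 + 2 * a) := by rw [ha]; ring
      _ ≤ R * (36 * (b + a ^ 2)) := by
          gcongr
          nlinarith [sq_nonneg (a - 1), sq_nonneg (2 * a - 1)]

theorem norm_centeredCovariance_sub_le (hp : ∀ᵐ y ∂p, ‖y‖ ≤ R) {q : ℝ} (hq : 0 ≤ q) {h u : E}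
    (hu : u + q • centeredCovariance p u = h - q • ∫ y, y ∂p) :
    ‖centeredCovariance p u - centeredCovariance p h‖ ≤ 4 * R ^ 3 * (q + ‖h‖ ^ 2) := by
  have hR := nonneg_of_ae_norm_le hp
  have hcov := norm_centeredCovariance_le hp
  obtain ⟨a, ha⟩ : ∃ a, a = R * ‖h‖ := ⟨_, rfl⟩
  obtain ⟨b, hb⟩ : ∃ b, b = q * R ^ 2 := ⟨_, rfl⟩
  have ha0 : 0 ≤ a := ha ▸ by positivity
  have hb0 : 0 ≤ b := hb ▸ by positivity
  have hmin : min 1 (q * ‖centeredCovariance p‖) ≤ min 1 (2 * b) := by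
    refine min_le_min_left _ ?_
    calc q * ‖centeredCovariance p‖ ≤ q * (2 * R ^ 2) := by gcongr
      _ = 2 * b := by rw [hb]; ring
  have hnorm : ‖∫ y, y ∂p + centeredCovariance p h‖ ≤ R * (1 + 2 * a) := by
    calc _ ≤ R + 2 * R ^ 2 * ‖h‖ := norm_add_le_of_le (norm_integral_id_le hp)
          ((centeredCovariance p).le_of_opNorm_le hcov h)
      _ = R * (1 + 2 * a) := by rw [ha]; ring
  calc _ ≤ _ := norm_map_sub_map_le_of_add_smul_eq (inner_centeredCovariance_nonneg p) hq hu
    _ ≤ min 1 (2 * b) * (R * (1 + 2 * a)) := by gcongr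
    _ = R * (min 1 (2 * b) * (1 + 2 * a)) := by ring
    _ ≤ R * (4 * (b + a ^ 2)) := by
        refine mul_le_mul_of_nonneg_left ?_ hR
        rcases le_total 1 (2 * b) with h1 | h1
        · rw [min_eq_left h1]
          nlinarith [sq_nonneg (a - 1)]
        · rw [min_eq_right h1]
          nlinarith [sq_nonneg (a - b)]
    _ = 4 * R ^ 3 * (q + ‖h‖ ^ 2) := by rw [ha, hb]; ring

/-- The vector `E[X] + Σ u` is the value the tilted mean would take for the Gaussian measure with
the mean and covariance of `p`. -/
theorem norm_integral_tilted_sub_gaussian_le (hp : ∀ᵐ y ∂p, ‖y‖ ≤ R) {q : ℝ} (hq : 0 ≤ q)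
    {h u : E} (hu : u + q • centeredCovariance p u = h - q • ∫ y, y ∂p) :
    ‖∫ y, y ∂p.tilted (quadraticTilt h q) - (∫ y, y ∂p + centeredCovariance p u)‖
      ≤ 40 * R ^ 3 * (q + ‖h‖ ^ 2) := by
  have hexp : Integrable (fun y ↦ Real.exp (quadraticTilt h q y)) p :=
    integrable_exp_of_ae_abs_le (continuous_quadraticTilt h q).aemeasurable
      (hp.mono fun y hy ↦ abs_quadraticTilt_le hq h hy)
  have := isProbabilityMeasure_tilted hexp
  have hid : Integrable (fun y ↦ y) (p.tilted (quadraticTilt h q)) :=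
    Integrable.of_bound aestronglyMeasurable_id R ((tilted_absolutelyContinuous p _).ae_le hp)
  have hmean : ∫ y, (y - ∫ z, z ∂p) ∂p.tilted (quadraticTilt h q)
      = ∫ y, y ∂p.tilted (quadraticTilt h q) - ∫ z, z ∂p := by
    rw [integral_sub hid (integrable_const _)]
    simp
  rw [← sub_sub, ← hmean]
  calc _ ≤ _ := norm_sub_le_norm_sub_add_norm_sub _ (centeredCovariance p h) _
    _ ≤ 36 * R ^ 3 * (q + ‖h‖ ^ 2) + 4 * R ^ 3 * (q + ‖h‖ ^ 2) :=
        add_le_add (norm_integral_tilted_sub_centeredCovariance_le hp hq h)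
          ((norm_sub_rev _ _).trans_le (norm_centeredCovariance_sub_le hp hq hu))
    _ = 40 * R ^ 3 * (q + ‖h‖ ^ 2) := by ring

end QuadraticTilt

section Denoiser

variable {d : ℕ}

theorem Wt_eq_mul_exp_quadraticTilt {t : ℝ} (ht : t ≠ 1) (y x : EuclideanSpace ℝ (Fin d)) :
    Wt t y x = Real.exp (-‖x‖ ^ 2 / (2 * (1 - t) ^ 2)) *
      Real.exp (quadraticTilt ((t / (1 - t) ^ 2) • x) (t ^ 2 / (1 - t) ^ 2) y) := by
  have hs : 1 - t ≠ 0 := sub_ne_zero.2 ht.symm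
  rw [Wt, quadraticTilt, ← Real.exp_add, norm_sub_sq_real, norm_smul, mul_pow, inner_smul_right,
    real_inner_smul_left, Real.norm_eq_abs, sq_abs]
  congr 1
  field_simp
  ring

theorem mtDen_eq_integral_tilted (p : Measure (EuclideanSpace ℝ (Fin d))) {t : ℝ} (ht : t ≠ 1)
    (x : EuclideanSpace ℝ (Fin d)) :
    mtDen p t x
      = ∫ y, y ∂p.tilted (quadraticTilt ((t / (1 - t) ^ 2) • x) (t ^ 2 / (1 - t) ^ 2)) := by
  simp only [integral_tilted, mtDen, Dt, Nt, Wt_eq_mul_exp_quadraticTilt ht, div_eq_inv_mul,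
    mul_smul, integral_const_mul, integral_smul]
  rw [smul_smul, mul_inv, mul_right_comm, inv_mul_cancel₀ (Real.exp_ne_zero _), one_mul]

theorem exists_mtG_eq_add_toEuclideanLin {S : Matrix (Fin d) (Fin d) ℝ} (hS : S.PosSemidef)
    (m x : EuclideanSpace ℝ (Fin d)) {t : ℝ} (ht : t ≠ 1) :
    ∃ u, u + (t ^ 2 / (1 - t) ^ 2) • Matrix.toEuclideanLin S u
        = (t / (1 - t) ^ 2) • x - (t ^ 2 / (1 - t) ^ 2) • m ∧
      mtG m S t x = m + Matrix.toEuclideanLin S u := by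
  have hs : (1 - t) ^ 2 ≠ 0 := pow_ne_zero 2 (sub_ne_zero.2 ht.symm)
  set M := t ^ 2 • S + (1 - t) ^ 2 • (1 : Matrix (Fin d) (Fin d) ℝ) with hM
  have hMpos : M.PosDef :=
    (Matrix.PosDef.one.smul (by positivity)).posSemidef_add (hS.smul (sq_nonneg t))
  set w := Matrix.toEuclideanLin M⁻¹ (x - t • m) with hw
  have hMw : t ^ 2 • Matrix.toEuclideanLin S w + (1 - t) ^ 2 • w = x - t • m := by
    calc _ = Matrix.toEuclideanLin M w := by simp [hM]
      _ = x - t • m := by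
        rw [hw, ← LinearMap.comp_apply, ← Matrix.toLpLin_mul_same,
          Matrix.mul_nonsing_inv _ ((Matrix.isUnit_iff_isUnit_det _).1 hMpos.isUnit)]
        simp
  refine ⟨t • w, smul_right_injective _ hs ?_, ?_⟩
  · simp only [map_smul, smul_add, smul_sub, smul_smul, ← mul_assoc, mul_div_cancel₀ _ hs]
    linear_combination (norm := module) t • hMw
  · rw [mtG, ← hM, Matrix.toLpLin_mul_same, LinearMap.comp_apply, map_smul]

variable {p : Measure (EuclideanSpace ℝ (Fin d))} [IsProbabilityMeasure p]

theorem toEuclideanLin_covMatrix (hp : MemLp id 2 p) :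
    Matrix.toEuclideanLin (covMatrix p) = (centeredCovariance p : _ →ₗ[ℝ] _) := by
  refine (EuclideanSpace.basisFun (Fin d) ℝ).toBasis.ext fun j ↦ PiLp.ext fun i ↦ ?_
  have hinner : (centeredCovariance p (EuclideanSpace.single j 1)) i
      = inner ℝ (centeredCovariance p (EuclideanSpace.single j 1)) (EuclideanSpace.single i 1) := by
    rw [EuclideanSpace.inner_single_right, one_mul, conj_trivial]
  rw [OrthonormalBasis.coe_toBasis, EuclideanSpace.basisFun_apply, ContinuousLinearMap.coe_coe,
    hinner, centeredCovariance, covarianceOperator_inner (memLp_id_map_sub_integral hp),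
    integral_map (by fun_prop) (by fun_prop)]
  simp [covMatrix, meanVec, mul_comm, EuclideanSpace.inner_single_left]

theorem posSemidef_covMatrix (hp : MemLp id 2 p) : (covMatrix p).PosSemidef := by
  rw [← Matrix.isPositive_toEuclideanLin_iff, toEuclideanLin_covMatrix hp]
  exact isPositive_covarianceOperator

theorem norm_mtDen_sub_mtG_le {R : ℝ} (hp : ∀ᵐ y ∂p, ‖y‖ ≤ R) {t : ℝ} (ht : t ≠ 1)
    (x : EuclideanSpace ℝ (Fin d)) :
    ‖mtDen p t x - mtG (meanVec p) (covMatrix p) t x‖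
      ≤ t ^ 2 * (40 * R ^ 3 * (1 / (1 - t) ^ 2 + ‖x‖ ^ 2 / (1 - t) ^ 4)) := by
  have hL2 := memLp_id_of_ae_norm_le hp
  obtain ⟨u, hu, hmtG⟩ :=
    exists_mtG_eq_add_toEuclideanLin (posSemidef_covMatrix hL2) (meanVec p) x ht
  rw [toEuclideanLin_covMatrix hL2] at hu hmtG
  rw [mtDen_eq_integral_tilted p ht, hmtG]
  refine (norm_integral_tilted_sub_gaussian_le hp (by positivity) hu).trans_eq ?_
  have hs : 1 - t ≠ 0 := sub_ne_zero.2 ht.symm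
  rw [norm_smul, mul_pow, Real.norm_eq_abs, sq_abs]
  field_simp

end Denoiser

theorem gaussian_plus_excess_t_general {d : ℕ} {R : ℝ}
    (p : Measure (EuclideanSpace ℝ (Fin d))) [IsProbabilityMeasure p]
    (hp : ∀ᵐ y ∂p, ‖y‖ ≤ R) :
    ∃ Htil : EuclideanSpace ℝ (Fin d) → ℝ → EuclideanSpace ℝ (Fin d),
      (∀ x t, t ≠ 1 → ‖Htil x t‖ ≤ 40 * R ^ 3 * (1 / (1 - t) ^ 2 + ‖x‖ ^ 2 / (1 - t) ^ 4)) ∧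
      ∀ x t, t ≠ 1 → mtDen p t x = mtG (meanVec p) (covMatrix p) t x + t ^ 2 • Htil x t := by
  have hR := nonneg_of_ae_norm_le hp
  refine ⟨fun x t ↦ (t ^ 2)⁻¹ • (mtDen p t x - mtG (meanVec p) (covMatrix p) t x),
    fun x t ht ↦ ?_, fun x t ht ↦ ?_⟩
  · rw [norm_smul, norm_inv, Real.norm_of_nonneg (sq_nonneg t)]
    exact inv_mul_le_of_le_mul₀ (sq_nonneg t) (by positivity) (norm_mtDen_sub_mtG_le hp ht x)
  · have hdiff := norm_mtDen_sub_mtG_le hp ht x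
    rcases eq_or_ne t 0 with rfl | h0
    · simpa [sub_eq_zero] using hdiff
    · rw [smul_inv_smul₀ (pow_ne_zero 2 h0), add_sub_cancel]

/-- for `p` supported in `B_R(0)` and every `δ ∈ (0,1)` there is a bounded function
`H̃ : B̄_R(0) × [−δ, δ] → ℝ^d` with `m_t(x) = m_t^G(x) + t² H̃(x, t)` for all `x ∈ B̄_R(0)` and
`|t| ≤ δ`. -/
theorem gaussian_plus_excess_t {d : ℕ} (R : ℝ) (hR : 0 < R)
    (p : Measure (EuclideanSpace ℝ (Fin d))) [IsProbabilityMeasure p]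
    (hsupp : p (Metric.ball (0 : EuclideanSpace ℝ (Fin d)) R)ᶜ = 0)
    (δ : ℝ) (hδ : δ ∈ Set.Ioo (0 : ℝ) 1) :
    ∃ Htil : EuclideanSpace ℝ (Fin d) → ℝ → EuclideanSpace ℝ (Fin d),
      (∃ C : ℝ, ∀ x ∈ Metric.closedBall (0 : EuclideanSpace ℝ (Fin d)) R,
        ∀ t ∈ Set.Icc (-δ) δ, ‖Htil x t‖ ≤ C) ∧
      ∀ x ∈ Metric.closedBall (0 : EuclideanSpace ℝ (Fin d)) R, ∀ t : ℝ, |t| ≤ δ →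
        mtDen p t x = mtG (meanVec p) (covMatrix p) t x + t ^ 2 • Htil x t := by
  have hp : ∀ᵐ y ∂p, ‖y‖ ≤ R := by
    filter_upwards [mem_ae_iff.2 hsupp] with y hy using (mem_ball_zero_iff.1 hy).le
  obtain ⟨Htil, hbound, hexpand⟩ := gaussian_plus_excess_t_general p hp
  refine ⟨Htil, ⟨40 * R ^ 3 * (1 / (1 - δ) ^ 2 + R ^ 2 / (1 - δ) ^ 4), fun x hx t ht ↦ ?_⟩,
    fun x _ t ht ↦ hexpand x t ((le_abs_self t).trans_lt (ht.trans_lt hδ.2)).ne⟩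
  have hδ1 : 0 < 1 - δ := sub_pos.2 hδ.2
  refine (hbound x t (ht.2.trans_lt hδ.2).ne).trans ?_
  gcongr
  exacts [ht.2, mem_closedBall_zero_iff.1 hx, ht.2]

end
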